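/- arXiv:0801.3023 — 3 statements merged into one kernel-verified Lean document; each statement's English description precedes it below -/
import Mathlib

section
/- Let K be a ℤ-graded module over a field k of characteristic zero and let [·,·] be a k-bilinear bracket on graded endomorphisms of K which sends a pair of endomorphisms of degrees i and j to an endomorphism of degree i+j+f, where f is an even integer. Assume that for all homogeneous graded endomorphisms F, G, H: (antisymmetry) [F,G] = −(−1)^{(|F|+f)(|G|+f)}[G,F]; (graded Jacobi) [F,[G,H]] = [[F,G],H] + (−1)^{(|F|+f)(|G|+f)}[G,[F,H]]; (derivation rule) [F, G∘H] = [F,G]∘H + (−1)^{(|F|+f)|G|} G∘[F,H]. Let δ be a homogeneous graded endomorphism of odd degree |δ| with [δ,δ] = 0. Then the derived bracket [F,G]_δ := [[F,δ],G] satisfies, for all homogeneous F, G, H: (graded Jacobi with shift f+|δ|) [F,[G,H]_δ]_δ = [[F,G]_δ,H]_δ + (−1)^{(|F|+f+|δ|)(|G|+f+|δ|)}[G,[F,H]_δ]_δ, and (derivation rule with shift f+|δ|) [F, G∘H]_δ = [F,G]_δ∘H + (−1)^{(|F|+f+|δ|)|G|} G∘[F,H]_δ. -/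
/-- `F` is a graded endomorphism of degree `d` with respect to the grading `𝒜`:
it is linear and maps `𝒜 i` into `𝒜 (i + d)` for every `i`. -/
def IsGradedEnd {k K : Type*} [Field k] [AddCommGroup K] [Module k K]
    (𝒜 : ℤ → Submodule k K) (F : Module.End k K) (d : ℤ) : Prop :=
  ∀ i : ℤ, (𝒜 i).map F ≤ 𝒜 (i + d)

/-- a Leibniz bracket of even degree `f` on the graded endomorphisms of a
ℤ-graded module, together with a square-zero element `δ` of odd degree, yields a derived
bracket `[F,G]_δ = [[F,δ],G]` which again satisfies the graded Jacobi identity and the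
derivation rule, with degree shift `f + |δ|`. -/
theorem derived_bracket_is_leibniz
    (k : Type*) [Field k] [CharZero k]
    (K : Type*) [AddCommGroup K] [Module k K]
    (𝒜 : ℤ → Submodule k K) (hK : DirectSum.IsInternal 𝒜)
    (br : Module.End k K →ₗ[k] Module.End k K →ₗ[k] Module.End k K)
    (f : ℤ) (hf : Even f)
    (hdeg : ∀ F G : Module.End k K, ∀ i j : ℤ,
      IsGradedEnd 𝒜 F i → IsGradedEnd 𝒜 G j → IsGradedEnd 𝒜 (br F G) (i + j + f))
    (hanti : ∀ F G : Module.End k K, ∀ i j : ℤ,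
      IsGradedEnd 𝒜 F i → IsGradedEnd 𝒜 G j →
      br F G = -(((Int.negOnePow ((i + f) * (j + f))) : ℤ) • br G F))
    (hjac : ∀ F G H : Module.End k K, ∀ i j l : ℤ,
      IsGradedEnd 𝒜 F i → IsGradedEnd 𝒜 G j → IsGradedEnd 𝒜 H l →
      br F (br G H) =
        br (br F G) H + ((Int.negOnePow ((i + f) * (j + f))) : ℤ) • br G (br F H))
    (hder : ∀ F G H : Module.End k K, ∀ i j l : ℤ,
      IsGradedEnd 𝒜 F i → IsGradedEnd 𝒜 G j → IsGradedEnd 𝒜 H l →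
      br F (G * H) = br F G * H + ((Int.negOnePow ((i + f) * j)) : ℤ) • (G * br F H))
    (δ : Module.End k K) (dδ : ℤ) (hδ : IsGradedEnd 𝒜 δ dδ) (hδodd : Odd dδ)
    (hδδ : br δ δ = 0) :
    (∀ F G H : Module.End k K, ∀ i j l : ℤ,
      IsGradedEnd 𝒜 F i → IsGradedEnd 𝒜 G j → IsGradedEnd 𝒜 H l →
      br (br F δ) (br (br G δ) H) =
        br (br (br (br F δ) G) δ) H +
          ((Int.negOnePow ((i + f + dδ) * (j + f + dδ))) : ℤ) •
            br (br G δ) (br (br F δ) H)) ∧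
    (∀ F G H : Module.End k K, ∀ i j l : ℤ,
      IsGradedEnd 𝒜 F i → IsGradedEnd 𝒜 G j → IsGradedEnd 𝒜 H l →
      br (br F δ) (G * H) =
        br (br F δ) G * H +
          ((Int.negOnePow ((i + f + dδ) * j)) : ℤ) • (G * br (br F δ) H)) := by
  have hs : ∀ a b : ℤ, Even (a - b) → Int.negOnePow a = Int.negOnePow b :=
    fun a b h => (Int.negOnePow_eq_iff a b).2 h
  obtain ⟨m, rfl⟩ := hf
  obtain ⟨n, rfl⟩ := hδodd
  have key : ∀ F : Module.End k K, ∀ i : ℤ, IsGradedEnd 𝒜 F i → br (br F δ) δ = 0 := by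
    intro F i hF
    have h1 := hjac F δ δ i _ _ hF hδ hδ
    have h2 := hanti δ (br F δ) _ _ hδ (hdeg F δ _ _ hF hδ)
    rw [hδδ, map_zero, h2, smul_neg, smul_smul, ← Units.val_mul, ← Int.negOnePow_add] at h1
    rw [Int.negOnePow_odd] at h1
    · simp only [Units.val_neg, Units.val_one, neg_smul, one_smul, neg_neg] at h1
      have h3 : (2 : k) • br (br F δ) δ = 0 := by rw [two_smul]; exact h1.symm
      exact (smul_eq_zero.1 h3).resolve_left two_ne_zero
    · have e : (i + (m + m)) * (2 * n + 1 + (m + m)) +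
          (2 * n + 1 + (m + m)) * (i + (2 * n + 1) + (m + m) + (m + m)) =
          (2 * (n + m) + 1) * (2 * (i + n + 3 * m) + 1) := by ring
      rw [e]
      exact (odd_two_mul_add_one _).mul (odd_two_mul_add_one _)
  constructor
  · intro F G H i j l hF hG hH
    have hX := hdeg F δ _ _ hF hδ
    have hY := hdeg G δ _ _ hG hδ
    have h1 := hjac _ _ H _ _ l hX hY hH
    have h2 := hjac _ G δ _ _ _ hX hG hδ
    rw [key F i hF, map_zero, smul_zero, add_zero] at h2
    rw [h1, h2]
    congr 3
    apply hs
    refine ⟨m * (i + j + 4 * m + 2 * (2 * n + 1)) + 2 * m * m, ?_⟩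
    ring
  · intro F G H i j l hF hG hH
    have hX := hdeg F δ _ _ hF hδ
    rw [hder _ G H _ _ l hX hG hH]
    congr 3
    apply hs
    exact ⟨m * j, by ring⟩
end

section
/- Let K be a ℤ-graded module over a field k of characteristic zero and let δ be a graded endomorphism of K of odd degree d with δ∘δ = 0. Define the derived bracket of the graded commutator by [F,G]_δ := [[F,δ],G], where [F,G] = F∘G − (−1)^{|F||G|} G∘F is the graded commutator. Then for all homogeneous graded endomorphisms F, G, H of K: (i) [F,[G,H]_δ]_δ = [[F,G]_δ,H]_δ + (−1)^{(|F|+d)(|G|+d)}[G,[F,H]_δ]_δ, and (ii) [F, G∘H]_δ = [F,G]_δ∘H + (−1)^{(|F|+d)|G|} G∘[F,H]_δ; that is, the derived bracket of the graded commutator with respect to δ is a Leibniz bracket of degree d. -/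
/-- The graded commutator `[x,y] = x*y - (-1)^{i j} y*x` of elements `x, y`
of degrees `i, j` in an associative ring. -/
def gcomm {A : Type*} [Ring A] (x y : A) (i j : ℤ) : A :=
  x * y - ((Int.negOnePow (i * j)) : ℤ) • (y * x)

/-- for a square-zero graded endomorphism `δ` of odd degree `d` of a
ℤ-graded module, the derived bracket `[F,G]_δ = [[F,δ],G]` of the graded commutator
satisfies the graded Jacobi identity and the derivation rule with degree shift `d`,
i.e. it is a Leibniz bracket of degree `d`. -/
theorem derived_bracket_of_commutator_is_leibniz
    (k : Type*) [Field k] [CharZero k]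
    (K : Type*) [AddCommGroup K] [Module k K]
    (𝒜 : ℤ → Submodule k K) (hK : DirectSum.IsInternal 𝒜)
    (δ : Module.End k K) (d : ℤ) (hδ : IsGradedEnd 𝒜 δ d) (hd : Odd d)
    (hδδ : δ * δ = 0) :
    (∀ F G H : Module.End k K, ∀ i j l : ℤ,
      IsGradedEnd 𝒜 F i → IsGradedEnd 𝒜 G j → IsGradedEnd 𝒜 H l →
      gcomm (gcomm F δ i d) (gcomm (gcomm G δ j d) H (j + d) l) (i + d) (j + d + l) =
        gcomm (gcomm (gcomm (gcomm F δ i d) G (i + d) j) δ (i + d + j) d) H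
            (i + d + j + d) l +
          ((Int.negOnePow ((i + d) * (j + d))) : ℤ) •
            gcomm (gcomm G δ j d) (gcomm (gcomm F δ i d) H (i + d) l) (j + d)
              (i + d + l)) ∧
    (∀ F G H : Module.End k K, ∀ i j l : ℤ,
      IsGradedEnd 𝒜 F i → IsGradedEnd 𝒜 G j → IsGradedEnd 𝒜 H l →
      gcomm (gcomm F δ i d) (G * H) (i + d) (j + l) =
        gcomm (gcomm F δ i d) G (i + d) j * H +
          ((Int.negOnePow ((i + d) * j)) : ℤ) •
            (G * gcomm (gcomm F δ i d) H (i + d) l)) := by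
  have hz : ∀ x : Module.End k K, δ * (δ * x) = 0 := fun x => by
    rw [← mul_assoc, hδδ, zero_mul]
  have hd' : ¬ Even d := Int.not_even_iff_odd.mpr hd
  have hs : ∀ n : ℤ, ((Int.negOnePow n : ℤˣ) : ℤ) = if Even n then 1 else -1 := fun n => by
    split_ifs with h
    · rw [Int.negOnePow_even n h]; rfl
    · rw [Int.negOnePow_odd n (Int.not_even_iff_odd.mp h)]; rfl
  constructor
  · intro F G H i j l _ _ _
    by_cases hi : Even i <;> by_cases hj : Even j <;> by_cases hl : Even l <;>
    · simp only [gcomm, hs, Int.even_mul, Int.even_add, hi, hj, hl, hd', iff_true, iff_false,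
        true_iff, false_iff, not_true, not_false_iff, or_true, true_or, or_false, false_or,
        if_true, if_false, one_smul, neg_smul, mul_sub, sub_mul, mul_add, add_mul, mul_neg,
        neg_mul, mul_assoc, hz, hδδ, mul_zero, zero_mul, sub_neg_eq_add]
      abel
  · intro F G H i j l _ _ _
    by_cases hi : Even i <;> by_cases hj : Even j <;> by_cases hl : Even l <;>
    · simp only [gcomm, hs, Int.even_mul, Int.even_add, hi, hj, hl, hd', iff_true, iff_false,
        true_iff, false_iff, not_true, not_false_iff, or_true, true_or, or_false, false_or,
        if_true, if_false, one_smul, neg_smul, mul_sub, sub_mul, mul_add, add_mul, mul_neg,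
        neg_mul, mul_assoc, sub_neg_eq_add]
      abel
end

section
/- Let K be a ℤ-graded module over a field k of characteristic zero and let δ be a graded endomorphism of K of odd degree. Let F and G be homogeneous graded endomorphisms of K whose graded commutator vanishes, [F,G] = 0. Then the derived brackets satisfy the symmetry relation [[F,δ],G] = (−1)^{|F|+|G|+|F||G|} [[G,δ],F], where [·,·] denotes the graded commutator. -/
/-- if `δ` is a graded endomorphism of odd degree and `F, G` are
homogeneous graded endomorphisms whose graded commutator vanishes, then
`[[F,δ],G] = (-1)^{|F| + |G| + |F||G|} [[G,δ],F]`. -/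
theorem derived_bracket_symmetry
    (k : Type*) [Field k] [CharZero k]
    (K : Type*) [AddCommGroup K] [Module k K]
    (𝒜 : ℤ → Submodule k K) (hK : DirectSum.IsInternal 𝒜)
    (δ : Module.End k K) (d : ℤ) (hδ : IsGradedEnd 𝒜 δ d) (hd : Odd d)
    (F G : Module.End k K) (i j : ℤ)
    (hF : IsGradedEnd 𝒜 F i) (hG : IsGradedEnd 𝒜 G j)
    (hFG : gcomm F G i j = 0) :
    gcomm (gcomm F δ i d) G (i + d) j =
      ((Int.negOnePow (i + j + i * j)) : ℤ) • gcomm (gcomm G δ j d) F (j + d) i := by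
  have key : F * G = ((Int.negOnePow (i * j)) : ℤ) • (G * F) := sub_eq_zero.mp hFG
  clear hFG hF hG hδ hK
  rcases Int.even_or_odd i with hi | hi <;> rcases Int.even_or_odd j with hj | hj <;>
    unfold gcomm <;>
    simp only [Int.negOnePow_add, Int.negOnePow_even, Int.negOnePow_odd, hi, hj, hd,
      Even.mul_right, Even.mul_left, Odd.mul, add_mul, Units.val_one, Units.val_neg,
      one_smul, neg_smul, mul_one, mul_neg, neg_neg] at key ⊢ <;>
    (have k1 := congrArg (fun x => x * δ) key) <;>
    (have k2 := congrArg (fun x => δ * x) key) <;>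
    simp only [sub_mul, mul_sub, neg_mul, mul_neg, mul_assoc, sub_neg_eq_add, add_mul, mul_add] at k1 k2 ⊢ <;>
    rw [k1, k2] <;> abel
end
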